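/- Let D ⊆ ℂ be a nonempty symmetric open set, let 𝒰 be a locally finite symmetric open covering of D, and let Z ⊆ D be a symmetric set which is discrete and closed in D. Call an open set B ⊆ ℂ basic if it is symmetric and either B ∩ ℝ ≠ ∅ and B is nonempty, connected and simply connected, or B ∩ ℝ = ∅ and B = V ∪ conj(V) with V ⊆ ℂ⁺ nonempty, open, connected and simply connected. Then there exists a countable covering { B_n }_{n ∈ ℕ} of D by basic open sets such that: (i) each B_n is contained in some member of 𝒰; (ii) for distinct indices, every intersection B_{n₁} ∩ B_{n₂} and B_{n₁} ∩ B_{n₂} ∩ B_{n₃} is either empty or basic; (iii) if B_{n₁} ∩ ℝ ≠ ∅, B_{n₂} ∩ ℝ ≠ ∅, n₁ ≠ n₂ and B_{n₁} ∩ B_{n₂} ≠ ∅, then B_{n₁} ∩ B_{n₂} ∩ ℝ ≠ ∅; moreover for each n with B_n ∩ ℝ ≠ ∅ there are at most two indices n₁ ≠ n₂, both different from n, with B_{n_i} ∩ ℝ ≠ ∅ and B_n ∩ B_{n_i} ≠ ∅, and in that case B_{n₁} ∩ B_{n₂} = ∅; (iv) B_{n₁} ∩ B_{n₂} ∩ B_{n₃}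 ∩ B_{n₄} = ∅ for any four distinct indices; (v) B_{n₁} ∩ B_{n₂} ∩ Z = ∅ for n₁ ≠ n₂. -/

import Mathlib

open Set

/-- An open set `B ⊆ ℂ` is basic if it is symmetric under conjugation and either it
meets the real axis and is nonempty, connected and simply connected, or it avoids the
real axis and is the union of a nonempty, open, connected, simply connected subset
`V` of the upper half-plane with its conjugate. -/
def IsBasicSet (B : Set ℂ) : Prop :=
  IsOpen B ∧ (starRingEnd ℂ) '' B = B ∧
    (((∃ x ∈ B, x.im = 0) ∧ B.Nonempty ∧ IsConnected B ∧ SimplyConnectedSpace B) ∨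
      ((∀ x ∈ B, x.im ≠ 0) ∧ ∃ V : Set ℂ, V.Nonempty ∧ IsOpen V ∧ IsConnected V ∧
        SimplyConnectedSpace V ∧ (∀ z ∈ V, 0 < z.im) ∧ B = V ∪ (starRingEnd ℂ) '' V))

/-- A rule choosing cut points in the middle thirds of intervals, one rule for each index, such
that all chosen points avoid a given countable set and distinct indices never share a cut point. -/
theorem exists_generic_cut {κ : Type*} [Countable κ] {A : Set ℝ} (hA : A.Countable) :
    ∃ cut : κ → ℝ → ℝ → ℝ,
      (∀ u a b, a < b → cut u a b ∈ Ioo ((2 * a + b) / 3) ((a + 2 * b) / 3)) ∧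
      (∀ u a b, cut u a b ∉ A) ∧
      (∀ u v a b a' b', cut u a b = cut v a' b' → u = v) := by
  obtain ⟨f, hf, hff⟩ := exists_seq_of_forall_finset_exists
    (fun y : ℝ => ∀ q : ℚ, y + q ∉ A) (fun x y : ℝ => ∀ q : ℚ, x + q ≠ y) (by
      intro s _
      have h1 : (⋃ q : ℚ, (fun a : ℝ => a - q) '' A).Countable :=
        countable_iUnion fun q => hA.image _
      have h2 : (⋃ q : ℚ, (fun a : ℝ => a + q) '' (s : Set ℝ)).Countable :=
        countable_iUnion fun q => s.countable_toSet.image _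
      obtain ⟨y, hy⟩ := (h1.union h2).dense_compl ℝ |>.nonempty
      refine ⟨y, fun q hq => hy (Or.inl (mem_iUnion.2 ⟨q, _, hq, by simp⟩)), ?_⟩
      exact fun x hx q hq => hy (Or.inr (mem_iUnion.2 ⟨q, x, hx, hq⟩)))
  have hinj : ∀ m n : ℕ, ∀ q r : ℚ, f m + q = f n + r → m = n := by
    intro m n q r h
    rcases lt_trichotomy m n with hmn | hmn | hmn
    · exact absurd (by push_cast; linarith) (hff m n hmn (q - r))
    · exact hmn
    · exact absurd (by push_cast; linarith) (hff n m hmn (r - q))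
  obtain ⟨code, hcode⟩ := exists_injective_nat κ
  have hex : ∀ (u : κ) (a b : ℝ), ∃ q : ℚ, a < b →
      f (code u) + q ∈ Ioo ((2 * a + b) / 3) ((a + 2 * b) / 3) := by
    intro u a b
    by_cases hab : a < b
    · obtain ⟨q, hq⟩ := exists_rat_btwn
        (show (2 * a + b) / 3 - f (code u) < (a + 2 * b) / 3 - f (code u) by linarith)
      exact ⟨q, fun _ => ⟨by linarith, by linarith⟩⟩
    · exact ⟨0, fun h => absurd h hab⟩
  choose q hq using hex
  exact ⟨fun u a b => f (code u) + q u a b, hq, fun u a b => hf _ _,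
    fun u v a b a' b' h => hcode (hinj _ _ _ _ h)⟩

/-- Two lists incomparable for the suffix order diverge at a longest common suffix. -/
theorem List.exists_cons_suffix_of_not_suffix {w w' : List Bool} (h : ¬ w <:+ w')
    (h' : ¬ w' <:+ w) : ∃ u b, (b :: u) <:+ w ∧ ((!b) :: u) <:+ w' := by
  induction w with
  | nil => exact absurd List.nil_suffix h
  | cons a w ih =>
    by_cases hw : w <:+ w'
    · obtain ⟨t, rfl⟩ := hw
      rcases List.eq_nil_or_concat t with rfl | ⟨t, b, rfl⟩
      · simp at h'
      · refine ⟨w, a, List.suffix_rfl, t, ?_⟩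
        have : b ≠ a := by
          rintro rfl
          exact h ⟨t, by simp⟩
        have : (!a) = b := by cases a <;> cases b <;> simp_all
        simp [this]
    · obtain ⟨u, b, h1, h2⟩ := ih hw fun hc => h' (hc.trans (List.suffix_cons a w))
      exact ⟨u, b, h1.trans (List.suffix_cons a w), h2⟩

/-- The lists `w` and `w'` branch off from their common suffix `u` in different directions. -/
def DivergeAt (u w w' : List Bool) : Prop :=
  ∃ b, (b :: u) <:+ w ∧ ((!b) :: u) <:+ w'

theorem List.eq_of_cons_suffix {u w : List Bool} {b c : Bool} (hb : (b :: u) <:+ w)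
    (hc : (c :: u) <:+ w) : b = c := by
  have := (List.suffix_of_suffix_length_le hb hc (by simp)).eq_of_length (by simp)
  simpa using this

theorem not_three_divergeAt {x w₁ w₂ w₃ : List Bool} (h₁₂ : DivergeAt x w₁ w₂)
    (h₁₃ : DivergeAt x w₁ w₃) (h₂₃ : DivergeAt x w₂ w₃) : False := by
  obtain ⟨b, hb₁, hb₂⟩ := h₁₂
  obtain ⟨c, hc₁, hc₃⟩ := h₁₃
  obtain ⟨d, hd₂, hd₃⟩ := h₂₃
  have h1 := List.eq_of_cons_suffix hb₁ hc₁
  have h2 := List.eq_of_cons_suffix hb₂ hd₂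
  have h3 := List.eq_of_cons_suffix hc₃ hd₃
  subst h1 h2
  cases b <;> simp at h3

/-- At most three lists can branch off pairwise at two given places, if every list passing
through the second place has passed through the first one in a fixed direction. -/
theorem not_four_divergeAt_of_suffix {x y w₁ w₂ w₃ w₄ : List Bool} {c : Bool}
    (hxy : (c :: x) <:+ y)
    (h₁₂ : DivergeAt x w₁ w₂ ∨ DivergeAt y w₁ w₂) (h₁₃ : DivergeAt x w₁ w₃ ∨ DivergeAt y w₁ w₃)
    (h₁₄ : DivergeAt x w₁ w₄ ∨ DivergeAt y w₁ w₄) (h₂₃ : DivergeAt x w₂ w₃ ∨ DivergeAt y w₂ w₃)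
    (h₂₄ : DivergeAt x w₂ w₄ ∨ DivergeAt y w₂ w₄)
    (h₃₄ : DivergeAt x w₃ w₄ ∨ DivergeAt y w₃ w₄) : False := by
  have hx : ∀ {w w'}, DivergeAt x w w' →
      ((c :: x) <:+ w ∧ ¬ (c :: x) <:+ w') ∨ (¬ (c :: x) <:+ w ∧ (c :: x) <:+ w') := by
    rintro w w' ⟨b, hb, hb'⟩
    by_cases hbc : b = c
    · subst hbc
      exact Or.inl ⟨hb, fun h => by simpa using List.eq_of_cons_suffix h hb'⟩
    · have : (!b) = c := by cases b <;> cases c <;> simp_all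
      exact Or.inr ⟨fun h => hbc (List.eq_of_cons_suffix hb h), this ▸ hb'⟩
  have hy : ∀ {w w'}, DivergeAt y w w' → (c :: x) <:+ w ∧ (c :: x) <:+ w' := by
    rintro w w' ⟨b, hb, hb'⟩
    exact ⟨hxy.trans ((List.suffix_cons _ _).trans hb),
      hxy.trans ((List.suffix_cons _ _).trans hb')⟩
  have t₁ := @not_three_divergeAt y w₁ w₂ w₃
  have t₂ := @not_three_divergeAt y w₁ w₂ w₄
  have t₃ := @not_three_divergeAt y w₁ w₃ w₄
  have t₄ := @not_three_divergeAt y w₂ w₃ w₄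
  grind

theorem not_four_divergeAt {x y w₁ w₂ w₃ w₄ : List Bool}
    (h₁₂ : DivergeAt x w₁ w₂ ∨ DivergeAt y w₁ w₂) (h₁₃ : DivergeAt x w₁ w₃ ∨ DivergeAt y w₁ w₃)
    (h₁₄ : DivergeAt x w₁ w₄ ∨ DivergeAt y w₁ w₄) (h₂₃ : DivergeAt x w₂ w₃ ∨ DivergeAt y w₂ w₃)
    (h₂₄ : DivergeAt x w₂ w₄ ∨ DivergeAt y w₂ w₄)
    (h₃₄ : DivergeAt x w₃ w₄ ∨ DivergeAt y w₃ w₄) : False := by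
  by_cases hxy : ∃ c, (c :: x) <:+ y
  · obtain ⟨c, hc⟩ := hxy
    exact not_four_divergeAt_of_suffix hc h₁₂ h₁₃ h₁₄ h₂₃ h₂₄ h₃₄
  by_cases hyx : ∃ c, (c :: y) <:+ x
  · obtain ⟨c, hc⟩ := hyx
    exact not_four_divergeAt_of_suffix hc h₁₂.symm h₁₃.symm h₁₄.symm h₂₃.symm h₂₄.symm h₃₄.symm
  by_cases hne : x = y
  · subst hne
    simp only [or_self] at h₁₂ h₁₃ h₂₃
    exact not_three_divergeAt h₁₂ h₁₃ h₂₃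
  have hstep : ∀ {u v : List Bool}, u <:+ v → u ≠ v → ∃ c, (c :: u) <:+ v := by
    rintro u v ⟨t, rfl⟩ huv
    rcases List.eq_nil_or_concat t with rfl | ⟨t, b, rfl⟩
    · simp at huv
    · exact ⟨b, t, by simp⟩
  have hdisj : ∀ w, x <:+ w → ¬ y <:+ w := by
    intro w hx hy
    rcases List.suffix_or_suffix_of_suffix hx hy with h | h
    · exact hxy (hstep h hne)
    · exact hyx (hstep h (Ne.symm hne))
  have hmem : ∀ {u w w'}, DivergeAt u w w' → u <:+ w ∧ u <:+ w' := by
    rintro u w w' ⟨b, hb, hb'⟩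
    exact ⟨(List.suffix_cons _ _).trans hb, (List.suffix_cons _ _).trans hb'⟩
  have t₁ := @not_three_divergeAt x w₁ w₂ w₃
  have t₂ := @not_three_divergeAt y w₁ w₂ w₃
  rcases h₁₂ with h₁₂ | h₁₂ <;> rcases h₁₃ with h₁₃ | h₁₃ <;> rcases h₂₃ with h₂₃ | h₂₃ <;>
    grind

open Metric Topology

/-- A family of compact sets, locally finite in a set `E` containing them, can be thickened
inside prescribed open neighbourhoods without creating new finite intersections. -/
theorem exists_thickening_nerve {X κ : Type*} [MetricSpace X] {E : Set X} {K V : κ → Set X}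
    (hK : ∀ i, IsCompact (K i)) (hKE : ∀ i, K i ⊆ E)
    (hlf : ∀ p ∈ E, ∃ N ∈ 𝓝 p, {i | (K i ∩ N).Nonempty}.Finite)
    (hV : ∀ i, IsOpen (V i)) (hKV : ∀ i, K i ⊆ V i) :
    ∃ ε : κ → ℝ, (∀ i, 0 < ε i) ∧ (∀ i, thickening (ε i) (K i) ⊆ V i) ∧
      ∀ (p : X) (T : Finset κ), T.Nonempty → (∀ i ∈ T, p ∈ thickening (ε i) (K i)) →
        ∃ x, ∀ i ∈ T, x ∈ K i := by
  have hr : ∀ x : E, ∃ r > 0, ∀ i, (K i ∩ ball (x : X) r).Nonempty → (x : X) ∈ K i := by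
    rintro ⟨x, hx⟩
    obtain ⟨N, hN, hfin⟩ := hlf x hx
    have hmem : N ∩ ⋂ i ∈ {i | (K i ∩ N).Nonempty ∧ x ∉ K i}, (K i)ᶜ ∈ 𝓝 x := by
      refine Filter.inter_mem hN ((Filter.biInter_mem (hfin.subset fun i hi => hi.1)).2 ?_)
      exact fun i hi => (hK i).isClosed.isOpen_compl.mem_nhds hi.2
    obtain ⟨r, hr, hball⟩ := Metric.mem_nhds_iff.1 hmem
    refine ⟨r, hr, fun i ⟨y, hyK, hy⟩ => by_contra fun hxi => ?_⟩
    have := (hball hy).2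
    simp only [mem_iInter] at this
    exact this i ⟨⟨y, hyK, (hball hy).1⟩, hxi⟩ hyK
  choose r hr0 hr using hr
  have hδ : ∀ i, ∃ δ > 0, ∀ q ∈ K i, ∃ x : E, ball q δ ⊆ ball (x : X) (r x) := fun i =>
    lebesgue_number_lemma_of_metric (hK i) (fun _ => isOpen_ball)
      fun q hq => mem_iUnion.2 ⟨⟨q, hKE i hq⟩, mem_ball_self (hr0 _)⟩
  choose δ hδ0 hδ using hδ
  choose η hη0 hη using fun i => (hK i).exists_thickening_subset_open (hV i) (hKV i)
  refine ⟨fun i => min (δ i / 2) (η i), fun i => lt_min (half_pos (hδ0 i)) (hη0 i),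
    fun i => (thickening_mono (min_le_right _ _) _).trans (hη i), fun p T hT hp => ?_⟩
  obtain ⟨i, hi, hmax⟩ := T.exists_max_image (fun i => min (δ i / 2) (η i)) hT
  obtain ⟨q, hq, hpq⟩ := mem_thickening_iff.1 (hp i hi)
  obtain ⟨x, hx⟩ := hδ i q hq
  refine ⟨x, fun j hj => hr x j ?_⟩
  obtain ⟨q', hq', hpq'⟩ := mem_thickening_iff.1 (hp j hj)
  refine ⟨q', hq', hx ?_⟩
  have h1 := hmax j hj
  have h2 := min_le_left (δ i / 2) (η i)
  have h3 := dist_triangle_left q' q p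
  rw [mem_ball]
  linarith

/-- The open thickening of a box, for the supremum distance, is an open box. -/
theorem mem_thickening_Icc_iff {κ : Type*} [Fintype κ] {a b p : κ → ℝ} (hab : a ≤ b) {ε : ℝ}
    (hε : 0 < ε) :
    p ∈ thickening ε (Icc a b) ↔ ∀ s, p s ∈ Ioo (a s - ε) (b s + ε) := by
  rw [mem_thickening_iff]
  constructor
  · rintro ⟨q, hq, hpq⟩ s
    have h := (dist_pi_lt_iff hε).1 hpq s
    rw [Real.dist_eq, abs_lt] at h
    have h1 := hq.1 s
    have h2 := hq.2 s
    constructor <;> linarith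
  · intro h
    refine ⟨fun s => max (a s) (min (p s) (b s)), ⟨fun s => le_max_left _ _,
      fun s => max_le (hab s) (min_le_right _ _)⟩, (dist_pi_lt_iff hε).2 fun s => ?_⟩
    have h1 := h s
    have h2 := hab s
    rw [Real.dist_eq, abs_lt]
    rcases le_total (p s) (b s) with h3 | h3
    · rw [min_eq_left h3]
      rcases le_total (a s) (p s) with h4 | h4
      · rw [max_eq_right h4]
        constructor <;> linarith
      · rw [max_eq_left h4]
        constructor <;> linarith [h1.1]
    · rw [min_eq_right h3, max_eq_right h2]
      constructor <;> linarith [h1.2]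

/-- The axis across which the box with address `u` is cut. -/
def cutAxis (u : List Bool) : Fin 2 := if Even u.length then 0 else 1

theorem cutAxis_eq_zero_or_one (u : List Bool) : cutAxis u = 0 ∨ cutAxis u = 1 := by
  unfold cutAxis
  split_ifs <;> simp

/-- The lower and upper corners of the box with address `u` in the binary subdivision of
`[-2, 2] × [0, 2]` along cuts, alternately across the two axes, placed by the rule `cut`. -/
def dyadicBox (cut : List Bool → ℝ → ℝ → ℝ) : List Bool → (Fin 2 → ℝ) × (Fin 2 → ℝ)
  | [] => (![-2, 0], ![2, 2])
  | b :: u =>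
    let c := cut u ((dyadicBox cut u).1 (cutAxis u)) ((dyadicBox cut u).2 (cutAxis u))
    if b then (Function.update (dyadicBox cut u).1 (cutAxis u) c, (dyadicBox cut u).2)
    else ((dyadicBox cut u).1, Function.update (dyadicBox cut u).2 (cutAxis u) c)

/-- The position of the cut of the box with address `u`. -/
def cutPoint (cut : List Bool → ℝ → ℝ → ℝ) (u : List Bool) : ℝ :=
  cut u ((dyadicBox cut u).1 (cutAxis u)) ((dyadicBox cut u).2 (cutAxis u))

/-- The closed box with address `u`. -/
def closedCell (cut : List Bool → ℝ → ℝ → ℝ) (u : List Bool) : Set (Fin 2 → ℝ) :=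
  Icc (dyadicBox cut u).1 (dyadicBox cut u).2

section Subdivision

variable {cut : List Bool → ℝ → ℝ → ℝ}

theorem mem_closedCell_iff {u : List Bool} {p : Fin 2 → ℝ} :
    p ∈ closedCell cut u ↔ ∀ s, (dyadicBox cut u).1 s ≤ p s ∧ p s ≤ (dyadicBox cut u).2 s := by
  simp [closedCell, Pi.le_def, forall_and]

theorem dyadicBox_true_cons (u : List Bool) : dyadicBox cut (true :: u) =
    (Function.update (dyadicBox cut u).1 (cutAxis u) (cutPoint cut u), (dyadicBox cut u).2) := by
  simp [dyadicBox, cutPoint]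

theorem dyadicBox_false_cons (u : List Bool) : dyadicBox cut (false :: u) =
    ((dyadicBox cut u).1, Function.update (dyadicBox cut u).2 (cutAxis u) (cutPoint cut u)) := by
  simp [dyadicBox, cutPoint]

theorem exists_mem_closedCell_cons {u : List Bool} {p : Fin 2 → ℝ} (hp : p ∈ closedCell cut u) :
    ∃ b, p ∈ closedCell cut (b :: u) := by
  rw [mem_closedCell_iff] at hp
  rcases le_total (p (cutAxis u)) (cutPoint cut u) with h | h
  · refine ⟨false, mem_closedCell_iff.2 fun s => ?_⟩
    rw [dyadicBox_false_cons]
    rcases eq_or_ne s (cutAxis u) with rfl | hs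
    · simpa using ⟨(hp _).1, h⟩
    · simpa [hs] using hp s
  · refine ⟨true, mem_closedCell_iff.2 fun s => ?_⟩
    rw [dyadicBox_true_cons]
    rcases eq_or_ne s (cutAxis u) with rfl | hs
    · simpa using ⟨h, (hp _).2⟩
    · simpa [hs] using hp s

theorem exists_mem_closedCell_length {p : Fin 2 → ℝ} (hp : p ∈ closedCell cut []) (k : ℕ) :
    ∃ u : List Bool, u.length = k ∧ p ∈ closedCell cut u := by
  induction k with
  | zero => exact ⟨[], rfl, hp⟩
  | succ k ih =>
    obtain ⟨u, hu, hpu⟩ := ih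
    obtain ⟨b, hb⟩ := exists_mem_closedCell_cons hpu
    exact ⟨b :: u, by simp [hu], hb⟩

theorem eq_cutPoint_of_mem_closedCell {u : List Bool} {p : Fin 2 → ℝ} {b : Bool}
    (h : p ∈ closedCell cut (b :: u)) (h' : p ∈ closedCell cut ((!b) :: u)) :
    p (cutAxis u) = cutPoint cut u := by
  have key : ∀ {p}, p ∈ closedCell cut (true :: u) → p ∈ closedCell cut (false :: u) →
      p (cutAxis u) = cutPoint cut u := by
    intro p h h'
    have h1 := (mem_closedCell_iff.1 h (cutAxis u)).1
    have h2 := (mem_closedCell_iff.1 h' (cutAxis u)).2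
    rw [dyadicBox_true_cons] at h1
    rw [dyadicBox_false_cons] at h2
    simp only [Function.update_self] at h1 h2
    exact le_antisymm h2 h1
  cases b
  · exact key h' h
  · exact key h h'

theorem dyadicBox_lt
    (hcut : ∀ u a b, a < b → cut u a b ∈ Ioo ((2 * a + b) / 3) ((a + 2 * b) / 3))
    (u : List Bool) (s : Fin 2) : (dyadicBox cut u).1 s < (dyadicBox cut u).2 s := by
  induction u generalizing s with
  | nil => fin_cases s <;> norm_num [dyadicBox]
  | cons b u ih =>
    have h := hcut u _ _ (ih (cutAxis u))
    have h' := ih (cutAxis u)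
    rcases eq_or_ne s (cutAxis u) with rfl | hs
    · cases b
      · rw [dyadicBox_false_cons]
        simp only [Function.update_self, cutPoint]
        linarith [h.1]
      · rw [dyadicBox_true_cons]
        simp only [Function.update_self, cutPoint]
        linarith [h.2]
    · cases b
      · simpa [dyadicBox_false_cons, hs] using ih s
      · simpa [dyadicBox_true_cons, hs] using ih s

theorem dyadicBox_cons_le
    (hcut : ∀ u a b, a < b → cut u a b ∈ Ioo ((2 * a + b) / 3) ((a + 2 * b) / 3))
    (b : Bool) (u : List Bool) (s : Fin 2) :
    (dyadicBox cut u).1 s ≤ (dyadicBox cut (b :: u)).1 s ∧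
      (dyadicBox cut (b :: u)).2 s ≤ (dyadicBox cut u).2 s := by
  have h' := dyadicBox_lt hcut u (cutAxis u)
  have h := hcut u _ _ h'
  rcases eq_or_ne s (cutAxis u) with rfl | hs
  · cases b
    · rw [dyadicBox_false_cons]
      simp only [Function.update_self, cutPoint]
      exact ⟨le_rfl, by linarith [h.2]⟩
    · rw [dyadicBox_true_cons]
      simp only [Function.update_self, cutPoint]
      exact ⟨by linarith [h.1], le_rfl⟩
  · cases b
    · simp [dyadicBox_false_cons, hs]
    · simp [dyadicBox_true_cons, hs]

theorem dyadicBox_width_cons_le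
    (hcut : ∀ u a b, a < b → cut u a b ∈ Ioo ((2 * a + b) / 3) ((a + 2 * b) / 3))
    (b : Bool) (u : List Bool) :
    (dyadicBox cut (b :: u)).2 (cutAxis u) - (dyadicBox cut (b :: u)).1 (cutAxis u) ≤
      2 / 3 * ((dyadicBox cut u).2 (cutAxis u) - (dyadicBox cut u).1 (cutAxis u)) := by
  have h := hcut u _ _ (dyadicBox_lt hcut u (cutAxis u))
  cases b
  · rw [dyadicBox_false_cons]
    simp only [Function.update_self, cutPoint]
    linarith [h.2]
  · rw [dyadicBox_true_cons]
    simp only [Function.update_self, cutPoint]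
    linarith [h.1]

theorem dyadicBox_width_le
    (hcut : ∀ u a b, a < b → cut u a b ∈ Ioo ((2 * a + b) / 3) ((a + 2 * b) / 3))
    (u : List Bool) (s : Fin 2) :
    (dyadicBox cut u).2 s - (dyadicBox cut u).1 s ≤ 4 * (2 / 3) ^ ((u.length + 1 - s) / 2) := by
  induction u generalizing s with
  | nil => fin_cases s <;> norm_num [dyadicBox]
  | cons b u ih =>
    have hmono := dyadicBox_cons_le hcut b u s
    rcases eq_or_ne s (cutAxis u) with rfl | hs
    · have h := dyadicBox_width_cons_le hcut b u
      have hexp : ((b :: u).length + 1 - (cutAxis u : ℕ)) / 2 =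
          (u.length + 1 - (cutAxis u : ℕ)) / 2 + 1 := by
        unfold cutAxis
        split_ifs with he
        · obtain ⟨k, hk⟩ := he
          simp; omega
        · obtain ⟨k, hk⟩ := Nat.not_even_iff_odd.1 he
          simp; omega
      rw [hexp, pow_succ]
      linarith [ih (cutAxis u)]
    · have hexp : ((b :: u).length + 1 - (s : ℕ)) / 2 = (u.length + 1 - (s : ℕ)) / 2 := by
        unfold cutAxis at hs
        split_ifs at hs with he
        · obtain ⟨k, hk⟩ := he
          have : s = 1 := by omega
          subst this
          simp; omega
        · obtain ⟨k, hk⟩ := Nat.not_even_iff_odd.1 he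
          have : s = 0 := by omega
          subst this
          simp; omega
      rw [hexp]
      linarith [ih s, hmono.1, hmono.2]

theorem exists_dyadicBox_width_lt
    (hcut : ∀ u a b, a < b → cut u a b ∈ Ioo ((2 * a + b) / 3) ((a + 2 * b) / 3))
    {δ : ℝ} (hδ : 0 < δ) : ∃ k, ∀ u : List Bool, u.length = k →
    ∀ s, (dyadicBox cut u).2 s - (dyadicBox cut u).1 s < δ := by
  obtain ⟨m, hm⟩ := exists_pow_lt_of_lt_one (show 0 < δ / 4 by positivity)
    (show (2 / 3 : ℝ) < 1 by norm_num)
  refine ⟨2 * m, fun u hu s => (dyadicBox_width_le hcut u s).trans_lt ?_⟩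
  have hexp : (u.length + 1 - (s : ℕ)) / 2 = m := by omega
  rw [hexp]
  linarith

theorem closedCell_anti
    (hcut : ∀ u a b, a < b → cut u a b ∈ Ioo ((2 * a + b) / 3) ((a + 2 * b) / 3))
    {u w : List Bool} (h : u <:+ w) : closedCell cut w ⊆ closedCell cut u := by
  obtain ⟨t, rfl⟩ := h
  induction t with
  | nil => exact subset_rfl
  | cons b t ih =>
    exact (Icc_subset_Icc (fun s => (dyadicBox_cons_le hcut b (t ++ u) s).1)
      fun s => (dyadicBox_cons_le hcut b (t ++ u) s).2).trans ih

theorem dyadicBox_snd_nonneg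
    (hcut : ∀ u a b, a < b → cut u a b ∈ Ioo ((2 * a + b) / 3) ((a + 2 * b) / 3))
    (u : List Bool) : 0 ≤ (dyadicBox cut u).1 1 := by
  induction u with
  | nil => simp [dyadicBox]
  | cons b u ih => exact ih.trans (dyadicBox_cons_le hcut b u 1).1

end Subdivision

/-- The addresses satisfying `P`, none of whose proper suffixes (ancestors) satisfies `P`. -/
def maximalCells (P : List Bool → Prop) : Set (List Bool) :=
  {u | P u ∧ ∀ v, v <:+ u → v ≠ u → ¬ P v}

theorem exists_suffix_mem_maximalCells {P : List Bool → Prop} {u : List Bool} (hu : P u) :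
    ∃ v, v <:+ u ∧ v ∈ maximalCells P := by
  induction hn : u.length using Nat.strong_induction_on generalizing u with
  | _ n ih =>
    by_cases h : u ∈ maximalCells P
    · exact ⟨u, List.suffix_rfl, h⟩
    · obtain ⟨v, hv, hne, hP⟩ : ∃ v, v <:+ u ∧ v ≠ u ∧ P v := by
        by_contra! hc
        exact h ⟨hu, hc⟩
      have hlt : v.length < n := hn ▸ lt_of_le_of_ne hv.length_le fun hl => hne (hv.eq_of_length hl)
      obtain ⟨w, hw, hwP⟩ := ih _ hlt hP rfl
      exact ⟨w, hw.trans hv, hwP⟩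

theorem exists_divergeAt_of_mem_maximalCells {cut : List Bool → ℝ → ℝ → ℝ}
    (hcut : ∀ u a b, a < b → cut u a b ∈ Ioo ((2 * a + b) / 3) ((a + 2 * b) / 3))
    {P : List Bool → Prop} {w w' : List Bool} (hw : w ∈ maximalCells P)
    (hw' : w' ∈ maximalCells P) (hne : w ≠ w') {p : Fin 2 → ℝ} (hp : p ∈ closedCell cut w)
    (hp' : p ∈ closedCell cut w') :
    ∃ u, DivergeAt u w w' ∧ p (cutAxis u) = cutPoint cut u := by
  obtain ⟨u, b, h1, h2⟩ := List.exists_cons_suffix_of_not_suffix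
    (fun h => hw'.2 w h hne hw.1) fun h => hw.2 w' h hne.symm hw'.1
  exact ⟨u, ⟨b, h1, h2⟩, eq_cutPoint_of_mem_closedCell (closedCell_anti hcut h1 hp)
    (closedCell_anti hcut h2 hp')⟩

/-- A point lies in at most three maximal cells. -/
theorem not_four_mem_closedCell {cut : List Bool → ℝ → ℝ → ℝ}
    (hcut : ∀ u a b, a < b → cut u a b ∈ Ioo ((2 * a + b) / 3) ((a + 2 * b) / 3))
    (hinj : Function.Injective (cutPoint cut)) {P : List Bool → Prop} {p : Fin 2 → ℝ}
    {w₁ w₂ w₃ w₄ : List Bool} (h₁ : w₁ ∈ maximalCells P) (h₂ : w₂ ∈ maximalCells P)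
    (h₃ : w₃ ∈ maximalCells P) (h₄ : w₄ ∈ maximalCells P) (h₁₂ : w₁ ≠ w₂) (h₁₃ : w₁ ≠ w₃)
    (h₁₄ : w₁ ≠ w₄) (h₂₃ : w₂ ≠ w₃) (h₂₄ : w₂ ≠ w₄) (h₃₄ : w₃ ≠ w₄)
    (hp₁ : p ∈ closedCell cut w₁) (hp₂ : p ∈ closedCell cut w₂) (hp₃ : p ∈ closedCell cut w₃)
    (hp₄ : p ∈ closedCell cut w₄) : False := by
  have hex : ∀ s : Fin 2, ∃ x : List Bool, ∀ u, p s = cutPoint cut u → u = x := by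
    intro s
    by_cases h : ∃ x, p s = cutPoint cut x
    · obtain ⟨x, hx⟩ := h
      exact ⟨x, fun u hu => hinj (hu.symm.trans hx)⟩
    · exact ⟨[], fun u hu => absurd ⟨u, hu⟩ h⟩
  obtain ⟨x, hx⟩ := hex 0
  obtain ⟨y, hy⟩ := hex 1
  have key : ∀ {w w'}, w ∈ maximalCells P → w' ∈ maximalCells P → w ≠ w' →
      p ∈ closedCell cut w → p ∈ closedCell cut w' → DivergeAt x w w' ∨ DivergeAt y w w' := by
    intro w w' hw hw' hne hp hp'
    obtain ⟨u, hu, hpu⟩ := exists_divergeAt_of_mem_maximalCells hcut hw hw' hne hp hp'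
    rcases cutAxis_eq_zero_or_one u with h | h
    · rw [h] at hpu
      exact Or.inl (hx u hpu ▸ hu)
    · rw [h] at hpu
      exact Or.inr (hy u hpu ▸ hu)
  exact not_four_divergeAt (key h₁ h₂ h₁₂ hp₁ hp₂) (key h₁ h₃ h₁₃ hp₁ hp₃)
    (key h₁ h₄ h₁₄ hp₁ hp₄) (key h₂ h₃ h₂₃ hp₂ hp₃) (key h₂ h₄ h₂₄ hp₂ hp₄)
    (key h₃ h₄ h₃₄ hp₃ hp₄)

/-- A point of the lower edge lies in at most two maximal cells. -/
theorem not_three_mem_closedCell {cut : List Bool → ℝ → ℝ → ℝ}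
    (hcut : ∀ u a b, a < b → cut u a b ∈ Ioo ((2 * a + b) / 3) ((a + 2 * b) / 3))
    (hinj : Function.Injective (cutPoint cut)) {P : List Bool → Prop} {p : Fin 2 → ℝ}
    (hp : ∀ u, p 1 ≠ cutPoint cut u)
    {w₁ w₂ w₃ : List Bool} (h₁ : w₁ ∈ maximalCells P) (h₂ : w₂ ∈ maximalCells P)
    (h₃ : w₃ ∈ maximalCells P) (h₁₂ : w₁ ≠ w₂) (h₁₃ : w₁ ≠ w₃) (h₂₃ : w₂ ≠ w₃)
    (hp₁ : p ∈ closedCell cut w₁) (hp₂ : p ∈ closedCell cut w₂)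
    (hp₃ : p ∈ closedCell cut w₃) : False := by
  have key : ∀ {w w'}, w ∈ maximalCells P → w' ∈ maximalCells P → w ≠ w' →
      p ∈ closedCell cut w → p ∈ closedCell cut w' →
      ∃ u, DivergeAt u w w' ∧ p 0 = cutPoint cut u := by
    intro w w' hw hw' hne hpw hpw'
    obtain ⟨u, hu, hpu⟩ := exists_divergeAt_of_mem_maximalCells hcut hw hw' hne hpw hpw'
    rcases cutAxis_eq_zero_or_one u with h | h
    · exact ⟨u, hu, h ▸ hpu⟩
    · exact absurd (h ▸ hpu) (hp u)
  obtain ⟨u, hu, hpu⟩ := key h₁ h₂ h₁₂ hp₁ hp₂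
  obtain ⟨v, hv, hpv⟩ := key h₁ h₃ h₁₃ hp₁ hp₃
  obtain ⟨w, hw, hpw⟩ := key h₂ h₃ h₂₃ hp₂ hp₃
  obtain rfl := hinj (hpu.symm.trans hpv)
  obtain rfl := hinj (hpu.symm.trans hpw)
  exact not_three_divergeAt hu hv hw

theorem exists_ball_closedCell_subset {cut : List Bool → ℝ → ℝ → ℝ}
    (hcut : ∀ u a b, a < b → cut u a b ∈ Ioo ((2 * a + b) / 3) ((a + 2 * b) / 3))
    {E : Set (Fin 2 → ℝ)} (hE : IsOpen E) {ι : Type*} {U : ι → Set (Fin 2 → ℝ)}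
    (hU : ∀ i, IsOpen (U i)) (hEU : E ⊆ ⋃ i, U i) {p : Fin 2 → ℝ} (hp : p ∈ E) :
    ∃ δ > 0, ∃ k, ∀ u : List Bool, u.length = k → (closedCell cut u ∩ ball p δ).Nonempty →
      ∃ i, closedCell cut u ⊆ E ∩ U i := by
  obtain ⟨i, hi⟩ := mem_iUnion.1 (hEU hp)
  obtain ⟨r, hr, hball⟩ := Metric.isOpen_iff.1 (hE.inter (hU i)) p ⟨hp, hi⟩
  obtain ⟨k, hk⟩ := exists_dyadicBox_width_lt hcut (half_pos hr)
  refine ⟨r / 2, half_pos hr, k, fun u hu ⟨q, hqu, hq⟩ => ⟨i, fun x hx => hball ?_⟩⟩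
  have hxq : dist x q < r / 2 := (dist_pi_lt_iff (half_pos hr)).2 fun s => by
    have h1 := mem_closedCell_iff.1 hx s
    have h2 := mem_closedCell_iff.1 hqu s
    have h3 := hk u hu s
    rw [Real.dist_eq, abs_lt]
    constructor <;> linarith
  have := dist_triangle x q p
  rw [mem_ball] at hq ⊢
  linarith

theorem locallyFinite_maximalCells {cut : List Bool → ℝ → ℝ → ℝ}
    (hcut : ∀ u a b, a < b → cut u a b ∈ Ioo ((2 * a + b) / 3) ((a + 2 * b) / 3))
    {E : Set (Fin 2 → ℝ)} (hE : IsOpen E) {ι : Type*} {U : ι → Set (Fin 2 → ℝ)}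
    (hU : ∀ i, IsOpen (U i)) (hEU : E ⊆ ⋃ i, U i) {p : Fin 2 → ℝ} (hp : p ∈ E) :
    ∃ N ∈ 𝓝 p, {w | w ∈ maximalCells (fun u => ∃ i, closedCell cut u ⊆ E ∩ U i) ∧
      (closedCell cut w ∩ N).Nonempty}.Finite := by
  obtain ⟨δ, hδ, k, hk⟩ := exists_ball_closedCell_subset hcut hE hU hEU hp
  refine ⟨ball p δ, ball_mem_nhds p hδ, (List.finite_length_le Bool k).subset ?_⟩
  rintro w ⟨hw, hne⟩
  by_contra hlen
  simp only [mem_ofPred_eq, not_le] at hlen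
  have hsuf : w.drop (w.length - k) <:+ w := List.drop_suffix _ _
  have hl : (w.drop (w.length - k)).length = k := by simp; omega
  refine hw.2 _ hsuf (fun h => ?_) (hk _ hl (hne.mono (inter_subset_inter_left _
    (closedCell_anti hcut hsuf))))
  rw [h] at hl
  omega

theorem exists_mem_maximalCells {cut : List Bool → ℝ → ℝ → ℝ}
    (hcut : ∀ u a b, a < b → cut u a b ∈ Ioo ((2 * a + b) / 3) ((a + 2 * b) / 3))
    {E : Set (Fin 2 → ℝ)} (hE : IsOpen E) {ι : Type*} {U : ι → Set (Fin 2 → ℝ)}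
    (hU : ∀ i, IsOpen (U i)) (hEU : E ⊆ ⋃ i, U i) {p : Fin 2 → ℝ} (hp : p ∈ E)
    (hroot : p ∈ closedCell cut []) :
    ∃ w ∈ maximalCells (fun u => ∃ i, closedCell cut u ⊆ E ∩ U i), p ∈ closedCell cut w := by
  obtain ⟨δ, hδ, k, hk⟩ := exists_ball_closedCell_subset hcut hE hU hEU hp
  obtain ⟨u, hu, hpu⟩ := exists_mem_closedCell_length hroot k
  obtain ⟨w, hwu, hw⟩ := exists_suffix_mem_maximalCells
    (P := fun u => ∃ i, closedCell cut u ⊆ E ∩ U i) (hk u hu ⟨p, hpu, mem_ball_self hδ⟩)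
  exact ⟨w, hw, closedCell_anti hcut hwu hpu⟩

theorem infinite_maximalCells {cut : List Bool → ℝ → ℝ → ℝ}
    (hcut : ∀ u a b, a < b → cut u a b ∈ Ioo ((2 * a + b) / 3) ((a + 2 * b) / 3))
    {E : Set (Fin 2 → ℝ)} (hE : IsOpen E) {ι : Type*} {U : ι → Set (Fin 2 → ℝ)}
    (hU : ∀ i, IsOpen (U i)) (hEU : E ⊆ ⋃ i, U i) (hb : ∀ p ∈ E, ∀ s, |p s| ≤ 2)
    (hne : ∃ p ∈ E, 0 ≤ p 1) :
    (maximalCells (fun u => ∃ i, closedCell cut u ⊆ E ∩ U i)).Infinite := by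
  intro hfin
  have hcover : E ∩ {p | 0 ≤ p 1} =
      ⋃ w ∈ maximalCells (fun u => ∃ i, closedCell cut u ⊆ E ∩ U i), closedCell cut w := by
    ext p
    simp only [mem_inter_iff, mem_ofPred_eq, mem_iUnion, exists_prop]
    constructor
    · rintro ⟨hp, hp0⟩
      refine exists_mem_maximalCells hcut hE hU hEU hp (mem_closedCell_iff.2 fun s => ?_)
      have := abs_le.1 (hb p hp s)
      fin_cases s
      · simpa [dyadicBox] using this
      · simpa [dyadicBox] using ⟨hp0, this.2⟩
    · rintro ⟨w, hw, hp⟩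
      obtain ⟨i, hi⟩ := hw.1
      exact ⟨(hi hp).1, (dyadicBox_snd_nonneg hcut w).trans (mem_closedCell_iff.1 hp 1).1⟩
  have hcomp : IsCompact (E ∩ {p | 0 ≤ p 1}) := by
    rw [hcover]
    exact hfin.isCompact_biUnion fun w _ => isCompact_Icc
  obtain ⟨p, hp, hp0⟩ := hne
  obtain ⟨q, ⟨hqE, hq0⟩, hmax⟩ := hcomp.exists_isMaxOn ⟨p, hp, hp0⟩
    (f := fun p => p 1) (by fun_prop)
  obtain ⟨r, hr, hball⟩ := Metric.isOpen_iff.1 hE q hqE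
  have hmem : Function.update q 1 (q 1 + r / 2) ∈ E := hball (by
    rw [mem_ball, dist_pi_lt_iff hr]
    intro s
    rcases eq_or_ne s 1 with rfl | hs
    · simp [abs_of_pos hr, hr]
    · simpa [hs] using hr)
  have hq0' : 0 ≤ q 1 := hq0
  have := hmax ⟨hmem, show 0 ≤ Function.update q 1 (q 1 + r / 2) 1 by simp; linarith⟩
  simp at this
  linarith

/-- The rectangular form of the covering: the part of a bounded open set lying above the lower
edge is covered by infinitely many open boxes, at most three of which meet at a point, with
prescribed points in a single box and with boxes along the lower edge forming chains. -/
theorem exists_box_covering {E : Set (Fin 2 → ℝ)} (hE : IsOpen E)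
    (hb : ∀ p ∈ E, ∀ s, |p s| ≤ 2) (hne : ∃ p ∈ E, 0 ≤ p 1) {ι : Type*}
    {U : ι → Set (Fin 2 → ℝ)} (hU : ∀ i, IsOpen (U i)) (hEU : E ⊆ ⋃ i, U i)
    {Z : Set (Fin 2 → ℝ)} (hZE : Z ⊆ E) (hZc : Z.Countable)
    (hZ : ∀ p ∈ E, ∃ N ∈ 𝓝 p, (N ∩ Z).Finite) :
    ∃ I J : ℕ → Set ℝ,
      (∀ n, IsOpen (I n) ∧ IsOpen (J n)) ∧
      (∀ n, (I n).OrdConnected ∧ (J n).OrdConnected) ∧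
      (∀ n, 0 ∈ J n ∨ J n ⊆ Ioi 0) ∧
      (∀ n, ∃ p : Fin 2 → ℝ, p 0 ∈ I n ∧ p 1 ∈ J n ∧ 0 ≤ p 1) ∧
      (∀ n, ∃ i, ∀ p : Fin 2 → ℝ, p 0 ∈ I n → p 1 ∈ J n → p ∈ E ∩ U i) ∧
      (∀ p ∈ E, 0 ≤ p 1 → ∃ n, p 0 ∈ I n ∧ p 1 ∈ J n) ∧
      (∀ n₁ n₂ n₃ n₄, n₁ ≠ n₂ → n₁ ≠ n₃ → n₁ ≠ n₄ → n₂ ≠ n₃ → n₂ ≠ n₄ → n₃ ≠ n₄ →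
        ∀ x y, x ∈ I n₁ → y ∈ J n₁ → x ∈ I n₂ → y ∈ J n₂ → x ∈ I n₃ → y ∈ J n₃ →
          x ∈ I n₄ → y ∈ J n₄ → False) ∧
      (∀ n₁ n₂, n₁ ≠ n₂ → ∀ p ∈ Z, p 0 ∈ I n₁ → p 1 ∈ J n₁ → p 0 ∈ I n₂ → p 1 ∈ J n₂ →
        False) ∧
      (∀ n₁ n₂ n₃, n₁ ≠ n₂ → n₁ ≠ n₃ → n₂ ≠ n₃ → 0 ∈ J n₁ → 0 ∈ J n₂ → 0 ∈ J n₃ →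
        ∀ x, x ∈ I n₁ → x ∈ I n₂ → x ∈ I n₃ → False) ∧
      (∀ n₁ n₂, n₁ ≠ n₂ → 0 ∈ J n₁ → 0 ∈ J n₂ → ¬ I n₁ ⊆ I n₂) := by
  classical
  obtain ⟨cut, hcut, hcutA, hcutinj⟩ := exists_generic_cut (κ := List Bool)
    (A := {0} ∪ ⋃ s : Fin 2, (fun p => p s) '' Z)
    ((countable_singleton _).union (countable_iUnion fun s => hZc.image _))
  have hinj : Function.Injective (cutPoint cut) := fun u v h => hcutinj _ _ _ _ _ _ h
  have hzero : ∀ u, 0 ≠ cutPoint cut u := fun u h => hcutA u _ _ (Or.inl h.symm)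
  set S := maximalCells (fun u => ∃ i, closedCell cut u ⊆ E ∩ U i)
  have hle : ∀ u, (dyadicBox cut u).1 ≤ (dyadicBox cut u).2 := fun u s =>
    (dyadicBox_lt hcut u s).le
  -- a generic marked point in each cell, on the lower edge for cells reaching it
  have hmark : ∀ m : S, ∃ x ∈ closedCell cut m, (∀ s u, x s ≠ cutPoint cut u) ∧
      ((dyadicBox cut m).1 1 = 0 → x 1 = 0) := by
    intro m
    have hcoord : ∀ s, ∃ t, ((dyadicBox cut m).1 s ≤ t ∧ t ≤ (dyadicBox cut m).2 s) ∧
        (∀ u, t ≠ cutPoint cut u) ∧ ((dyadicBox cut m).1 s = 0 → t = 0) := by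
      intro s
      by_cases h0 : (dyadicBox cut m).1 s = 0
      · exact ⟨0, ⟨h0.le, h0 ▸ hle m s⟩, hzero, fun _ => rfl⟩
      · obtain ⟨t, ht, hts⟩ := ((countable_range (cutPoint cut)).dense_compl ℝ).exists_mem_open
          isOpen_Ioo (nonempty_Ioo.2 (dyadicBox_lt hcut m s))
        exact ⟨t, ⟨hts.1.le, hts.2.le⟩, fun u hu => ht ⟨u, hu.symm⟩, fun h => absurd h h0⟩
    choose x hx using hcoord
    exact ⟨x, mem_closedCell_iff.2 fun s => (hx s).1, fun s => (hx s).2.1, (hx 1).2.2⟩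
  choose mark hmarkmem hmarkgen hmarkzero using hmark
  choose idx hidx using fun m : S => m.2.1
  have huniq : ∀ {p : Fin 2 → ℝ}, (∀ s u, p s ≠ cutPoint cut u) → ∀ {m m' : S},
      p ∈ closedCell cut m → p ∈ closedCell cut m' → m = m' := by
    intro p hp m m' hm hm'
    by_contra hne
    obtain ⟨u, -, hu⟩ := exists_divergeAt_of_mem_maximalCells hcut m.2 m'.2
      (fun h => hne (Subtype.ext h)) hm hm'
    exact hp _ _ hu
  have hZgen : ∀ p ∈ Z, ∀ s u, p s ≠ cutPoint cut u := fun p hp s u h =>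
    hcutA u _ _ (Or.inr (mem_iUnion.2 ⟨s, p, hp, h⟩))
  have hlfS : ∀ p ∈ E, ∃ N ∈ 𝓝 p, {m : S | (closedCell cut m ∩ N).Nonempty}.Finite := by
    intro p hp
    obtain ⟨N, hN, hfin⟩ := locallyFinite_maximalCells hcut hE hU hEU hp
    refine ⟨N, hN, Set.Finite.of_finite_image (f := Subtype.val) (hfin.subset ?_)
      Subtype.val_injective.injOn⟩
    rintro _ ⟨m, hm, rfl⟩
    exact ⟨m.2, hm⟩
  obtain ⟨ε, hε0, hεV, hnerve⟩ := exists_thickening_nerve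
    (E := E) (K := Sum.elim (fun m : S => closedCell cut m)
      (fun g : (Z ∪ range mark : Set (Fin 2 → ℝ)) => {(g : Fin 2 → ℝ)}))
    (V := Sum.elim (fun m : S => (E ∩ U (idx m)) ∩ {p | (dyadicBox cut m).1 1 = 0 ∨ 0 < p 1})
      (fun _ => univ))
    (by
      rintro (m | g)
      · exact isCompact_Icc
      · exact isCompact_singleton)
    (by
      rintro (m | ⟨g, hg | ⟨m, rfl⟩⟩)
      · exact fun p hp => (hidx m hp).1
      · exact singleton_subset_iff.2 (hZE hg)
      · exact singleton_subset_iff.2 (hidx m (hmarkmem m)).1)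
    (by
      intro p hp
      obtain ⟨N, hN, hfin⟩ := hlfS p hp
      obtain ⟨N', hN', hfin'⟩ := hZ p hp
      refine ⟨N ∩ N', Filter.inter_mem hN hN', ?_⟩
      have hG : {g : (Z ∪ range mark : Set (Fin 2 → ℝ)) | (g : Fin 2 → ℝ) ∈ N ∩ N'}.Finite := by
        refine Set.Finite.of_finite_image (f := Subtype.val)
          ((hfin'.union (hfin.image mark)).subset ?_) Subtype.val_injective.injOn
        rintro _ ⟨⟨g, hg | ⟨m, rfl⟩⟩, hgN, rfl⟩
        · exact Or.inl ⟨hgN.2, hg⟩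
        · exact Or.inr ⟨m, ⟨mark m, hmarkmem m, hgN.1⟩, rfl⟩
      refine ((hfin.image Sum.inl).union (hG.image Sum.inr)).subset ?_
      rintro (m | g) ⟨x, hx, hxN⟩
      · exact Or.inl ⟨m, ⟨x, hx, hxN.1⟩, rfl⟩
      · obtain rfl : x = g := hx
        exact Or.inr ⟨g, hxN, rfl⟩)
    (by
      rintro (m | g)
      · refine (hE.inter (hU _)).inter ?_
        by_cases h : (dyadicBox cut m).1 1 = 0
        · simp [h]
        · simpa [h] using isOpen_lt continuous_const (continuous_apply 1)
      · exact isOpen_univ)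
    (by
      rintro (m | g)
      · refine fun p hp => ⟨hidx m hp, ?_⟩
        rcases (dyadicBox_snd_nonneg hcut m).eq_or_lt' with h | h
        · exact Or.inl h
        · exact Or.inr (h.trans_le (mem_closedCell_iff.1 hp 1).1)
      · exact subset_univ _)
  have hinf : Infinite S := (infinite_maximalCells hcut hE hU hEU hb hne).to_subtype
  obtain ⟨e⟩ : Nonempty (ℕ ≃ S) := nonempty_equiv_of_countable
  set I : Fin 2 → ℕ → Set ℝ := fun s n => Ioo ((dyadicBox cut (e n)).1 s - ε (Sum.inl (e n)))
    ((dyadicBox cut (e n)).2 s + ε (Sum.inl (e n)))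
  have hmem : ∀ {n} {p : Fin 2 → ℝ}, p 0 ∈ I 0 n → p 1 ∈ I 1 n →
      p ∈ thickening (ε (Sum.inl (e n))) (closedCell cut (e n)) := fun h0 h1 =>
    (mem_thickening_Icc_iff (hle _) (hε0 _)).2 (Fin.forall_fin_two.2 ⟨h0, h1⟩)
  have hcell : ∀ {n} {p : Fin 2 → ℝ}, p ∈ closedCell cut (e n) → ∀ s, p s ∈ I s n := by
    intro n p hp s
    have h := mem_closedCell_iff.1 hp s
    have h' := hε0 (Sum.inl (e n))
    exact ⟨by linarith, by linarith⟩
  have hsub : ∀ {n} {p : Fin 2 → ℝ}, p 0 ∈ I 0 n → p 1 ∈ I 1 n → p ∈ E ∩ U (idx (e n)) ∧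
      ((dyadicBox cut (e n)).1 1 = 0 ∨ 0 < p 1) := fun h0 h1 =>
    hεV _ (hmem h0 h1)
  have hedge : ∀ {n}, 0 ∈ I 1 n → (dyadicBox cut (e n)).1 1 = 0 := by
    intro n hn
    simpa using (hsub (p := ![mark (e n) 0, 0]) (hcell (hmarkmem _) 0) hn).2
  have hsing : ∀ {n} {g : Fin 2 → ℝ} (hg : g ∈ Z ∪ range mark), g 0 ∈ I 0 n → g 1 ∈ I 1 n →
      g ∈ closedCell cut (e n) := by
    intro n g hg h0 h1
    obtain ⟨x, hx⟩ := hnerve g {Sum.inl (e n), Sum.inr ⟨g, hg⟩} (by simp) (by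
      intro i hi
      rcases Finset.mem_insert.1 hi with rfl | hi
      · exact hmem h0 h1
      · obtain rfl := Finset.mem_singleton.1 hi
        exact self_subset_thickening (hε0 _) _ rfl)
    obtain rfl : x = g := hx (Sum.inr ⟨g, hg⟩) (by simp)
    exact hx (Sum.inl (e n)) (by simp)
  refine ⟨I 0, I 1, fun n => ⟨isOpen_Ioo, isOpen_Ioo⟩,
    fun n => ⟨ordConnected_Ioo, ordConnected_Ioo⟩, fun n => ?_, fun n => ?_, fun n => ?_,
    fun p hp hp0 => ?_, ?_, ?_, ?_, ?_⟩
  · rcases (dyadicBox_snd_nonneg hcut (e n)).eq_or_lt' with h | h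
    · refine Or.inl ⟨?_, ?_⟩
      · have := hε0 (Sum.inl (e n))
        linarith
      · have := hε0 (Sum.inl (e n))
        have := hle (e n) 1
        linarith
    · refine Or.inr fun y hy => ?_
      have := (hsub (p := ![mark (e n) 0, y]) (hcell (hmarkmem _) 0) hy).2
      simpa [h.ne'] using this
  · exact ⟨mark (e n), hcell (hmarkmem _) 0, hcell (hmarkmem _) 1,
      (dyadicBox_snd_nonneg hcut _).trans (mem_closedCell_iff.1 (hmarkmem _) 1).1⟩
  · exact ⟨idx (e n), fun p h0 h1 => (hsub h0 h1).1⟩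
  · obtain ⟨w, hw, hpw⟩ := exists_mem_maximalCells hcut hE hU hEU hp
      (mem_closedCell_iff.2 fun s => by
        have := abs_le.1 (hb p hp s)
        fin_cases s
        · simpa [dyadicBox] using this
        · simpa [dyadicBox] using ⟨hp0, this.2⟩)
    obtain ⟨n, hn⟩ := e.surjective ⟨w, hw⟩
    have hpn : p ∈ closedCell cut (e n) := by rwa [hn]
    exact ⟨n, hcell hpn 0, hcell hpn 1⟩
  · intro n₁ n₂ n₃ n₄ h₁₂ h₁₃ h₁₄ h₂₃ h₂₄ h₃₄ x y hx₁ hy₁ hx₂ hy₂ hx₃ hy₃ hx₄ hy₄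
    obtain ⟨q, hq⟩ := hnerve ![x, y]
      {Sum.inl (e n₁), Sum.inl (e n₂), Sum.inl (e n₃), Sum.inl (e n₄)} (by simp) (by
        simp only [Finset.mem_insert, Finset.mem_singleton]
        rintro _ (rfl | rfl | rfl | rfl)
        · exact hmem hx₁ hy₁
        · exact hmem hx₂ hy₂
        · exact hmem hx₃ hy₃
        · exact hmem hx₄ hy₄)
    have hval : ∀ {n n'}, n ≠ n' → ((e n : S) : List Bool) ≠ e n' := fun h h' =>
      h (e.injective (Subtype.ext h'))
    exact not_four_mem_closedCell hcut hinj (e n₁).2 (e n₂).2 (e n₃).2 (e n₄).2 (hval h₁₂)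
      (hval h₁₃) (hval h₁₄) (hval h₂₃) (hval h₂₄) (hval h₃₄) (hq (Sum.inl (e n₁)) (by simp))
      (hq (Sum.inl (e n₂)) (by simp)) (hq (Sum.inl (e n₃)) (by simp))
      (hq (Sum.inl (e n₄)) (by simp))
  · intro n₁ n₂ h₁₂ p hp hx₁ hy₁ hx₂ hy₂
    exact h₁₂ (e.injective (huniq (hZgen p hp) (hsing (Or.inl hp) hx₁ hy₁)
      (hsing (Or.inl hp) hx₂ hy₂)))
  · intro n₁ n₂ n₃ h₁₂ h₁₃ h₂₃ hJ₁ hJ₂ hJ₃ x hx₁ hx₂ hx₃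
    obtain ⟨q, hq⟩ := hnerve ![x, 0]
      {Sum.inl (e n₁), Sum.inl (e n₂), Sum.inl (e n₃)} (by simp) (by
        simp only [Finset.mem_insert, Finset.mem_singleton]
        rintro _ (rfl | rfl | rfl)
        · exact hmem hx₁ hJ₁
        · exact hmem hx₂ hJ₂
        · exact hmem hx₃ hJ₃)
    have hval : ∀ {n n'}, n ≠ n' → ((e n : S) : List Bool) ≠ e n' := fun h h' =>
      h (e.injective (Subtype.ext h'))
    have hproj : ∀ {n}, 0 ∈ I 1 n → q ∈ closedCell cut (e n) →
        ![q 0, 0] ∈ closedCell cut (e n) := by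
      intro n hn hqn
      have h0 := hedge hn
      have h1 := hle (e n) 1
      rw [mem_closedCell_iff] at hqn ⊢
      refine Fin.forall_fin_two.2 ⟨hqn 0, ?_⟩
      simp only [Matrix.cons_val_one, Matrix.cons_val_fin_one]
      exact ⟨h0.le, h0 ▸ h1⟩
    exact not_three_mem_closedCell hcut hinj hzero (e n₁).2 (e n₂).2 (e n₃).2 (hval h₁₂)
      (hval h₁₃) (hval h₂₃) (hproj hJ₁ (hq (Sum.inl (e n₁)) (by simp)))
      (hproj hJ₂ (hq (Sum.inl (e n₂)) (by simp))) (hproj hJ₃ (hq (Sum.inl (e n₃)) (by simp)))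
  · intro n₁ n₂ h₁₂ hJ₁ hJ₂ hsubset
    have h1 : mark (e n₁) 1 = 0 := hmarkzero _ (hedge hJ₁)
    have h2 : mark (e n₁) ∈ closedCell cut (e n₂) := hsing (Or.inr ⟨e n₁, rfl⟩)
      (hsubset (hcell (hmarkmem _) 0)) (h1 ▸ hJ₂)
    exact h₁₂ (e.injective (huniq (hmarkgen _) (hmarkmem _) h2))

theorem Convex.simplyConnectedSpace {s : Set ℂ} (hs : Convex ℝ s) (hne : s.Nonempty) :
    SimplyConnectedSpace s :=
  have := hs.contractibleSpace hne
  inferInstance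

/-- The set of complex numbers with real part in `I` and absolute imaginary part in `J`. -/
def foldedBox (I J : Set ℝ) : Set ℂ := {z | z.re ∈ I ∧ |z.im| ∈ J}

theorem foldedBox_inter (I J I' J' : Set ℝ) :
    foldedBox I J ∩ foldedBox I' J' = foldedBox (I ∩ I') (J ∩ J') := by
  ext z
  simp only [foldedBox, mem_inter_iff, mem_ofPred_eq]
  tauto

theorem Complex.conj_image_eq_self_iff {s : Set ℂ} :
    (starRingEnd ℂ) '' s = s ↔ ∀ z, (starRingEnd ℂ) z ∈ s ↔ z ∈ s := by
  constructor
  · intro h z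
    nth_rewrite 1 [← h]
    exact Function.Injective.mem_set_image (starRingEnd ℂ).injective
  · intro h
    ext z
    constructor
    · rintro ⟨w, hw, rfl⟩
      exact (h w).2 hw
    · exact fun hz => ⟨_, (h z).2 hz, Complex.conj_conj z⟩

theorem isBasicSet_foldedBox {I J : Set ℝ} (hI : IsOpen I) (hJ : IsOpen J)
    (hI' : I.OrdConnected) (hJ' : J.OrdConnected) (h0 : 0 ∈ J ∨ J ⊆ Ioi 0)
    (hne : (foldedBox I J).Nonempty) : IsBasicSet (foldedBox I J) := by
  have hconj : (starRingEnd ℂ) '' foldedBox I J = foldedBox I J :=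
    Complex.conj_image_eq_self_iff.2 fun z => by simp [foldedBox]
  refine ⟨(hI.preimage Complex.continuous_re).inter
    (hJ.preimage (continuous_abs.comp Complex.continuous_im)), hconj, ?_⟩
  obtain ⟨z, hzI, hzJ⟩ := hne
  rcases h0 with h0 | h0
  · left
    have hord : ((fun y : ℝ => |y|) ⁻¹' J).OrdConnected := by
      refine ⟨fun a ha b hb y hy => hJ'.out h0 (?_ : max |a| |b| ∈ J) ⟨abs_nonneg y, ?_⟩⟩
      · rcases max_choice |a| |b| with h | h
        · rw [h]
          exact ha
        · rw [h]
          exact hb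
      · exact abs_le_max_abs_abs hy.1 hy.2
    have hconv : Convex ℝ (foldedBox I J) :=
      (hI'.convex.linear_preimage Complex.reLm).inter (hord.convex.linear_preimage Complex.imLm)
    have hne : (foldedBox I J).Nonempty := ⟨z, hzI, hzJ⟩
    exact ⟨⟨z.re, ⟨by simpa using hzI, by simpa using h0⟩, by simp⟩, hne,
      hconv.isConnected hne, hconv.simplyConnectedSpace hne⟩
  · right
    refine ⟨fun x hx hx0 => ?_, {z | z.re ∈ I ∧ z.im ∈ J}, ?_⟩
    · have := h0 hx.2
      simp [hx0] at this
    · have hconv : Convex ℝ {z : ℂ | z.re ∈ I ∧ z.im ∈ J} :=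
        (hI'.convex.linear_preimage Complex.reLm).inter
          (hJ'.convex.linear_preimage Complex.imLm)
      have hne : {z : ℂ | z.re ∈ I ∧ z.im ∈ J}.Nonempty := ⟨⟨z.re, |z.im|⟩, hzI, hzJ⟩
      refine ⟨hne, (hI.preimage Complex.continuous_re).inter (hJ.preimage Complex.continuous_im),
        hconv.isConnected hne, hconv.simplyConnectedSpace hne, fun z hz => h0 hz.2, ?_⟩
      ext w
      constructor
      · rintro ⟨hw, hw'⟩
        rcases abs_choice w.im with h | h
        · exact Or.inl ⟨hw, h ▸ hw'⟩
        · exact Or.inr ⟨(starRingEnd ℂ) w, ⟨by simpa using hw, by simpa [← h] using hw'⟩, by simp⟩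
      · rintro (⟨hw, hw'⟩ | ⟨w, ⟨hw, hw'⟩, rfl⟩)
        · exact ⟨hw, by rwa [abs_of_pos (h0 hw')]⟩
        · exact ⟨by simpa using hw, by
            simpa [abs_of_pos (show 0 < w.im from h0 hw')] using hw'⟩

theorem Real.isOpenEmbedding_arctan : IsOpenEmbedding Real.arctan :=
  isOpen_Ioo.isOpenEmbedding_subtypeVal.comp Real.tanOrderIso.symm.toHomeomorph.isOpenEmbedding

/-- The embedding of the complex plane into a bounded square by `Real.arctan` on coordinates. -/
noncomputable def arctanCoord (z : ℂ) : Fin 2 → ℝ := ![Real.arctan z.re, Real.arctan z.im]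

theorem isOpenEmbedding_arctanCoord : IsOpenEmbedding arctanCoord := by
  have h := (Homeomorph.finTwoArrow (X := ℝ)).symm.isOpenEmbedding.comp
    ((Real.isOpenEmbedding_arctan.prodMap Real.isOpenEmbedding_arctan).comp
      Complex.equivRealProdCLM.toHomeomorph.isOpenEmbedding)
  exact h

theorem abs_arctanCoord_le (z : ℂ) (s : Fin 2) : |arctanCoord z s| ≤ 2 := by
  have key : ∀ x : ℝ, |Real.arctan x| ≤ 2 := fun x => abs_le.2
    ⟨by linarith [Real.neg_pi_div_two_lt_arctan x, Real.pi_lt_four],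
      by linarith [Real.arctan_lt_pi_div_two x, Real.pi_lt_four]⟩
  fin_cases s
  · exact key z.re
  · exact key z.im

/-- A subset of `D` which is discrete and closed in `D` is locally finite in `D`. -/
theorem exists_nhds_finite_inter_of_isClosed {X : Type*} [TopologicalSpace X] {D Z : Set X}
    (hd : DiscreteTopology Z) (hc : IsClosed (Subtype.val ⁻¹' Z : Set D)) (hZD : Z ⊆ D)
    {p : X} (hp : p ∈ D) : ∃ N ∈ 𝓝 p, (N ∩ Z).Finite := by
  by_cases hpZ : p ∈ Z
  · obtain ⟨N, hN, h⟩ := nhds_inter_eq_singleton_of_mem_discrete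
      (isDiscrete_iff_discreteTopology.2 hd) hpZ
    exact ⟨N, hN, h ▸ finite_singleton p⟩
  · have := hc.isOpen_compl.mem_nhds (show (⟨p, hp⟩ : D) ∈ (Subtype.val ⁻¹' Z : Set D)ᶜ from hpZ)
    obtain ⟨N, hN, h⟩ := mem_nhds_subtype _ _ _ |>.1 this
    refine ⟨N, hN, finite_empty.subset ?_⟩
    rintro x ⟨hxN, hxZ⟩
    exact h (show (⟨x, hZD hxZ⟩ : D) ∈ Subtype.val ⁻¹' N from hxN) hxZ

/-- Three pairwise intersecting order-connected sets of a linear order have a common point. -/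
theorem Set.OrdConnected.exists_mem_inter {α : Type*} [LinearOrder α] {I₁ I₂ I₃ : Set α}
    (h₁ : I₁.OrdConnected) (h₂ : I₂.OrdConnected) (h₃ : I₃.OrdConnected)
    (h₁₂ : (I₁ ∩ I₂).Nonempty) (h₁₃ : (I₁ ∩ I₃).Nonempty) (h₂₃ : (I₂ ∩ I₃).Nonempty) :
    ∃ x, x ∈ I₁ ∧ x ∈ I₂ ∧ x ∈ I₃ := by
  obtain ⟨x, hx₁, hx₂⟩ := h₁₂
  obtain ⟨y, hy₁, hy₃⟩ := h₁₃
  obtain ⟨z, hz₂, hz₃⟩ := h₂₃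
  rcases le_total x y with hxy | hxy <;> rcases le_total y z with hyz | hyz <;>
    rcases le_total x z with hxz | hxz
  · exact ⟨y, hy₁, h₂.out hx₂ hz₂ ⟨hxy, hyz⟩, hy₃⟩
  · exact ⟨y, hy₁, h₂.out hx₂ hz₂ ⟨hxy, hyz⟩, hy₃⟩
  · exact ⟨z, h₁.out hx₁ hy₁ ⟨hxz, hyz⟩, hz₂, hz₃⟩
  · exact ⟨x, hx₁, hx₂, h₃.out hz₃ hy₃ ⟨hxz, hxy⟩⟩
  · exact ⟨x, hx₁, hx₂, h₃.out hy₃ hz₃ ⟨hxy, hxz⟩⟩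
  · exact ⟨z, h₁.out hy₁ hx₁ ⟨hyz, hxz⟩, hz₂, hz₃⟩
  · exact ⟨y, hy₁, h₂.out hz₂ hx₂ ⟨hyz, hxy⟩, hy₃⟩
  · exact ⟨y, hy₁, h₂.out hz₂ hx₂ ⟨hyz, hxy⟩, hy₃⟩

/-- An order-connected set meeting three pairwise disjoint order-connected sets contains one. -/
theorem Set.OrdConnected.subset_of_three_disjoint {α : Type*} [LinearOrder α]
    {I I₁ I₂ I₃ : Set α} (h : I.OrdConnected) (h₁ : I₁.OrdConnected) (h₂ : I₂.OrdConnected)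
    (h₃ : I₃.OrdConnected) (hI₁ : (I ∩ I₁).Nonempty) (hI₂ : (I ∩ I₂).Nonempty)
    (hI₃ : (I ∩ I₃).Nonempty) (h₁₂ : I₁ ∩ I₂ = ∅) (h₁₃ : I₁ ∩ I₃ = ∅) (h₂₃ : I₂ ∩ I₃ = ∅) :
    I₁ ⊆ I ∨ I₂ ⊆ I ∨ I₃ ⊆ I := by
  have key : ∀ {x y z : α} {L : Set α}, L.OrdConnected → x ∈ I → z ∈ I → y ∈ L → x ∉ L → z ∉ L →
      x ≤ y → y ≤ z → L ⊆ I := by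
    intro x y z L hL hx hz hy hxL hzL hxy hyz t ht
    refine h.out hx hz ⟨le_of_not_ge fun htx => hxL (hL.out ht hy ⟨htx, hxy⟩),
      le_of_not_ge fun hzt => hzL (hL.out hy ht ⟨hyz, hzt⟩)⟩
  obtain ⟨x, hx, hx₁⟩ := hI₁
  obtain ⟨y, hy, hy₂⟩ := hI₂
  obtain ⟨z, hz, hz₃⟩ := hI₃
  have nx₂ : x ∉ I₂ := fun hc => notMem_empty x (h₁₂ ▸ ⟨hx₁, hc⟩)
  have nx₃ : x ∉ I₃ := fun hc => notMem_empty x (h₁₃ ▸ ⟨hx₁, hc⟩)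
  have ny₁ : y ∉ I₁ := fun hc => notMem_empty y (h₁₂ ▸ ⟨hc, hy₂⟩)
  have ny₃ : y ∉ I₃ := fun hc => notMem_empty y (h₂₃ ▸ ⟨hy₂, hc⟩)
  have nz₁ : z ∉ I₁ := fun hc => notMem_empty z (h₁₃ ▸ ⟨hc, hz₃⟩)
  have nz₂ : z ∉ I₂ := fun hc => notMem_empty z (h₂₃ ▸ ⟨hc, hz₃⟩)
  rcases le_total x y with hxy | hxy <;> rcases le_total y z with hyz | hyz <;>
    rcases le_total x z with hxz | hxz
  · exact Or.inr (Or.inl (key h₂ hx hz hy₂ nx₂ nz₂ hxy hyz))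
  · exact Or.inr (Or.inl (key h₂ hx hz hy₂ nx₂ nz₂ hxy hyz))
  · exact Or.inr (Or.inr (key h₃ hx hy hz₃ nx₃ ny₃ hxz hyz))
  · exact Or.inl (key h₁ hz hy hx₁ nz₁ ny₁ hxz hxy)
  · exact Or.inl (key h₁ hy hz hx₁ ny₁ nz₁ hxy hxz)
  · exact Or.inr (Or.inr (key h₃ hy hx hz₃ ny₃ nx₃ hyz hxz))
  · exact Or.inr (Or.inl (key h₂ hz hx hy₂ nz₂ nx₂ hyz hxy))
  · exact Or.inr (Or.inl (key h₂ hz hx hy₂ nz₂ nx₂ hyz hxy))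

/-- Existence of Cartan coverings (slicewise form): given a nonempty symmetric open
set `D ⊆ ℂ`, a locally finite symmetric open covering `U` of `D` and a symmetric
discrete closed subset `Z` of `D`, there is a countable covering of `D` by basic open
sets, subordinated to `U`, whose double and triple intersections are empty or basic,
whose restriction to the real axis forms a chain of order two, with no quadruple
intersections, and whose double intersections avoid `Z`. -/
theorem exists_cartan_covering (D : Set ℂ)
    (hne : D.Nonempty) (hopen : IsOpen D) (hsym : (starRingEnd ℂ) '' D = D)
    {ι : Type} (U : ι → Set ℂ)
    (hUopen : ∀ i, IsOpen (U i)) (hUsym : ∀ i, (starRingEnd ℂ) '' U i = U i)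
    (hUcover : D ⊆ ⋃ i, U i) (hUlf : LocallyFinite U)
    (Z : Set ℂ) (hZD : Z ⊆ D) (hZsym : (starRingEnd ℂ) '' Z = Z)
    (hZdiscrete : DiscreteTopology Z)
    (hZclosed : IsClosed (Subtype.val ⁻¹' Z : Set D)) :
    ∃ B : ℕ → Set ℂ,
      (∀ n, IsBasicSet (B n)) ∧
      (∀ n, B n ⊆ D) ∧
      (⋃ n, B n) = D ∧
      -- (i) subordination
      (∀ n, ∃ i, B n ⊆ U i) ∧
      -- (ii) double and triple intersections are empty or basic
      (∀ n₁ n₂, n₁ ≠ n₂ → (B n₁ ∩ B n₂ = ∅ ∨ IsBasicSet (B n₁ ∩ B n₂))) ∧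
      (∀ n₁ n₂ n₃, n₁ ≠ n₂ → n₁ ≠ n₃ → n₂ ≠ n₃ →
        (B n₁ ∩ B n₂ ∩ B n₃ = ∅ ∨ IsBasicSet (B n₁ ∩ B n₂ ∩ B n₃))) ∧
      -- (iii) chain property along the real axis
      (∀ n₁ n₂, n₁ ≠ n₂ → (∃ x ∈ B n₁, x.im = 0) → (∃ x ∈ B n₂, x.im = 0) →
        (B n₁ ∩ B n₂).Nonempty → ∃ x ∈ B n₁ ∩ B n₂, x.im = 0) ∧
      (∀ n, (∃ x ∈ B n, x.im = 0) →
        (∀ n₁ n₂ n₃, n₁ ≠ n₂ → n₁ ≠ n₃ → n₂ ≠ n₃ → n₁ ≠ n → n₂ ≠ n → n₃ ≠ n →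
          ¬ ((∃ x ∈ B n₁, x.im = 0) ∧ (B n ∩ B n₁).Nonempty ∧
             (∃ x ∈ B n₂, x.im = 0) ∧ (B n ∩ B n₂).Nonempty ∧
             (∃ x ∈ B n₃, x.im = 0) ∧ (B n ∩ B n₃).Nonempty)) ∧
        (∀ n₁ n₂, n₁ ≠ n₂ → n₁ ≠ n → n₂ ≠ n →
          (∃ x ∈ B n₁, x.im = 0) → (B n ∩ B n₁).Nonempty →
          (∃ x ∈ B n₂, x.im = 0) → (B n ∩ B n₂).Nonempty →
          B n₁ ∩ B n₂ = ∅)) ∧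
      -- (iv) no quadruple intersections
      (∀ n₁ n₂ n₃ n₄, n₁ ≠ n₂ → n₁ ≠ n₃ → n₁ ≠ n₄ → n₂ ≠ n₃ → n₂ ≠ n₄ → n₃ ≠ n₄ →
        B n₁ ∩ B n₂ ∩ B n₃ ∩ B n₄ = ∅) ∧
      -- (v) double intersections avoid Z
      (∀ n₁ n₂, n₁ ≠ n₂ → B n₁ ∩ B n₂ ∩ Z = ∅) := by
  have hfold : ∀ {s : Set ℂ}, (starRingEnd ℂ) '' s = s → ∀ z : ℂ,
      ((⟨z.re, |z.im|⟩ : ℂ) ∈ s ↔ z ∈ s) := by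
    intro s hs z
    rcases abs_choice z.im with h | h
    · rw [h]
    · rw [h]
      exact Complex.conj_image_eq_self_iff.1 hs z
  have hemb := isOpenEmbedding_arctanCoord
  obtain ⟨I, J, hopenIJ, hord, hzero, hnonempty, hsub, hcover, hfour, hZ2, hthree, hnsub⟩ :=
    exists_box_covering (E := arctanCoord '' D) (hemb.isOpenMap D hopen)
      (by
        rintro _ ⟨z, -, rfl⟩ s
        exact abs_arctanCoord_le z s)
      (by
        obtain ⟨z, hz⟩ := hne
        exact ⟨_, ⟨_, (hfold hsym z).2 hz, rfl⟩, by simp [arctanCoord]⟩)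
      (U := fun i => arctanCoord '' U i) (fun i => hemb.isOpenMap _ (hUopen i))
      (by
        rw [← image_iUnion]
        exact image_mono hUcover)
      (Z := arctanCoord '' Z) (image_mono hZD)
      (((HereditarilyLindelofSpace.isLindelof Z).countable_of_isDiscrete
        (isDiscrete_iff_discreteTopology.2 hZdiscrete)).image _)
      (by
        rintro _ ⟨z, hz, rfl⟩
        obtain ⟨N, hN, h⟩ := exists_nhds_finite_inter_of_isClosed hZdiscrete hZclosed hZD hz
        refine ⟨_, hemb.isOpenMap.image_mem_nhds hN, ?_⟩
        rw [← image_inter hemb.injective]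
        exact h.image _)
  set B : ℕ → Set ℂ := fun n => foldedBox (Real.arctan ⁻¹' I n) (Real.arctan ⁻¹' J n) with hB
  have hI_open : ∀ n, IsOpen (Real.arctan ⁻¹' I n) := fun n =>
    (hopenIJ n).1.preimage Real.continuous_arctan
  have hJ_open : ∀ n, IsOpen (Real.arctan ⁻¹' J n) := fun n =>
    (hopenIJ n).2.preimage Real.continuous_arctan
  have hI_ord : ∀ n, (Real.arctan ⁻¹' I n).OrdConnected := fun n =>
    (hord n).1.preimage_mono Real.arctan_mono
  have hJ_ord : ∀ n, (Real.arctan ⁻¹' J n).OrdConnected := fun n =>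
    (hord n).2.preimage_mono Real.arctan_mono
  have hJ_zero : ∀ n, 0 ∈ Real.arctan ⁻¹' J n ∨ Real.arctan ⁻¹' J n ⊆ Ioi 0 := fun n =>
    (hzero n).imp (fun h => by simpa using h) fun h t ht => Real.arctan_pos.1 (h ht)
  have hJ_inter : ∀ {s t : Set ℝ}, (0 ∈ s ∨ s ⊆ Ioi 0) → (0 ∈ t ∨ t ⊆ Ioi 0) →
      (0 ∈ s ∩ t ∨ s ∩ t ⊆ Ioi 0) := by
    rintro s t (hs | hs) (ht | ht)
    · exact Or.inl ⟨hs, ht⟩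
    · exact Or.inr (inter_subset_right.trans ht)
    · exact Or.inr (inter_subset_left.trans hs)
    · exact Or.inr (inter_subset_left.trans hs)
  have hDU : ∀ n, ∃ i, B n ⊆ D ∩ U i := by
    intro n
    obtain ⟨i, hi⟩ := hsub n
    refine ⟨i, fun z hz => ?_⟩
    obtain ⟨hD, hUi⟩ := hi (arctanCoord ⟨z.re, |z.im|⟩) hz.1 hz.2
    exact ⟨(hfold hsym z).1 (hemb.injective.mem_set_image.1 hD),
      (hfold (hUsym i) z).1 (hemb.injective.mem_set_image.1 hUi)⟩
  have hBne : ∀ n, (B n).Nonempty := by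
    intro n
    obtain ⟨p, hp0, hp1, hpos⟩ := hnonempty n
    obtain ⟨i, hi⟩ := hsub n
    obtain ⟨⟨w, -, rfl⟩, -⟩ := hi p hp0 hp1
    refine ⟨w, hp0, ?_⟩
    rw [abs_of_nonneg (Real.arctan_nonneg.1 hpos)]
    exact hp1
  have hreal : ∀ {n}, (∃ x ∈ B n, x.im = 0) → 0 ∈ J n := by
    rintro n ⟨x, hx, hx0⟩
    simpa [hx0] using hx.2
  have hImeet : ∀ {m n}, (B m ∩ B n).Nonempty → (I m ∩ I n).Nonempty := by
    rintro m n ⟨z, hm, hn⟩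
    exact ⟨_, hm.1, hn.1⟩
  -- two neighbours of a box on the real axis are disjoint, by the one-dimensional Helly theorem
  have hdisj : ∀ n, 0 ∈ J n → ∀ n₁ n₂, n₁ ≠ n₂ → n₁ ≠ n → n₂ ≠ n → 0 ∈ J n₁ →
      (B n ∩ B n₁).Nonempty → 0 ∈ J n₂ → (B n ∩ B n₂).Nonempty → I n₁ ∩ I n₂ = ∅ := by
    intro n h n₁ n₂ h₁₂ h₁n h₂n h₁ hn₁ h₂ hn₂
    by_contra hc
    obtain ⟨x, hx, hx₁, hx₂⟩ := (hord n).1.exists_mem_inter (hord n₁).1 (hord n₂).1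
      (hImeet hn₁) (hImeet hn₂) (nonempty_iff_ne_empty.2 hc)
    exact hthree n n₁ n₂ h₁n.symm h₂n.symm h₁₂ h h₁ h₂ x hx hx₁ hx₂
  refine ⟨B, fun n => isBasicSet_foldedBox (hI_open n) (hJ_open n) (hI_ord n) (hJ_ord n)
    (hJ_zero n) (hBne n), fun n => ?_, ?_, fun n => ?_, fun n₁ n₂ _ => ?_,
    fun n₁ n₂ n₃ _ _ _ => ?_, ?_, fun n hn => ⟨?_, ?_⟩, ?_, ?_⟩
  · obtain ⟨i, hi⟩ := hDU n
    exact hi.trans inter_subset_left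
  · refine Subset.antisymm (iUnion_subset fun n => ?_) fun z hz => ?_
    · obtain ⟨i, hi⟩ := hDU n
      exact hi.trans inter_subset_left
    · obtain ⟨n, hn⟩ := hcover _ ⟨_, (hfold hsym z).2 hz, rfl⟩
        (Real.arctan_nonneg.2 (abs_nonneg z.im))
      exact mem_iUnion.2 ⟨n, hn⟩
  · obtain ⟨i, hi⟩ := hDU n
    exact ⟨i, hi.trans inter_subset_right⟩
  · rcases (B n₁ ∩ B n₂).eq_empty_or_nonempty with h | h
    · exact Or.inl h
    · simp only [hB, foldedBox_inter] at h ⊢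
      exact Or.inr (isBasicSet_foldedBox ((hI_open _).inter (hI_open _))
        ((hJ_open _).inter (hJ_open _)) ((hI_ord _).inter (hI_ord _))
        ((hJ_ord _).inter (hJ_ord _)) (hJ_inter (hJ_zero _) (hJ_zero _)) h)
  · rcases (B n₁ ∩ B n₂ ∩ B n₃).eq_empty_or_nonempty with h | h
    · exact Or.inl h
    · simp only [hB, foldedBox_inter] at h ⊢
      exact Or.inr (isBasicSet_foldedBox (((hI_open _).inter (hI_open _)).inter (hI_open _))
        (((hJ_open _).inter (hJ_open _)).inter (hJ_open _))
        (((hI_ord _).inter (hI_ord _)).inter (hI_ord _))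
        (((hJ_ord _).inter (hJ_ord _)).inter (hJ_ord _))
        (hJ_inter (hJ_inter (hJ_zero _) (hJ_zero _)) (hJ_zero _)) h)
  · rintro n₁ n₂ - h₁ h₂ ⟨z, hz₁, hz₂⟩
    exact ⟨z.re, ⟨⟨hz₁.1, by simpa using hreal h₁⟩, ⟨hz₂.1, by simpa using hreal h₂⟩⟩, by simp⟩
  · rintro n₁ n₂ n₃ h₁₂ h₁₃ h₂₃ h₁n h₂n h₃n ⟨h₁, hn₁, h₂, hn₂, h₃, hn₃⟩
    have h := hreal hn
    rcases (hord n).1.subset_of_three_disjoint (hord n₁).1 (hord n₂).1 (hord n₃).1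
      (hImeet hn₁) (hImeet hn₂) (hImeet hn₃)
      (hdisj n h n₁ n₂ h₁₂ h₁n h₂n (hreal h₁) hn₁ (hreal h₂) hn₂)
      (hdisj n h n₁ n₃ h₁₃ h₁n h₃n (hreal h₁) hn₁ (hreal h₃) hn₃)
      (hdisj n h n₂ n₃ h₂₃ h₂n h₃n (hreal h₂) hn₂ (hreal h₃) hn₃) with hs | hs | hs
    · exact hnsub n₁ n h₁n (hreal h₁) h hs
    · exact hnsub n₂ n h₂n (hreal h₂) h hs
    · exact hnsub n₃ n h₃n (hreal h₃) h hs
  · intro n₁ n₂ h₁₂ h₁n h₂n h₁ hn₁ h₂ hn₂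
    refine eq_empty_of_forall_notMem fun z hz => notMem_empty (Real.arctan z.re) ?_
    rw [← hdisj n (hreal hn) n₁ n₂ h₁₂ h₁n h₂n (hreal h₁) hn₁ (hreal h₂) hn₂]
    exact ⟨hz.1.1, hz.2.1⟩
  · intro n₁ n₂ n₃ n₄ h₁₂ h₁₃ h₁₄ h₂₃ h₂₄ h₃₄
    refine eq_empty_of_forall_notMem ?_
    rintro z ⟨⟨⟨hz₁, hz₂⟩, hz₃⟩, hz₄⟩
    exact hfour n₁ n₂ n₃ n₄ h₁₂ h₁₃ h₁₄ h₂₃ h₂₄ h₃₄ _ _ hz₁.1 hz₁.2 hz₂.1 hz₂.2 hz₃.1 hz₃.2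
      hz₄.1 hz₄.2
  · intro n₁ n₂ h₁₂
    refine eq_empty_of_forall_notMem ?_
    rintro z ⟨⟨hz₁, hz₂⟩, hz⟩
    exact hZ2 n₁ n₂ h₁₂ _ ⟨_, (hfold hZsym z).2 hz, rfl⟩ hz₁.1 hz₁.2 hz₂.1 hz₂.2
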